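/- Let l ≥ 1 and let 𝒟 ≤ 1 be any upper bound for the largest eigenvalue λ_{N−1}[l] of the normalized Laplacian Δ[l] of the neighborhood graph Γ[l], i.e. λ_{N−1}[l] ≤ 𝒟. If l is even, then every eigenvalue λ_k of Δ lies in the union of intervals [0, 1 − (1 − 𝒟)^{1/l}] ∪ [1 + (1 − 𝒟)^{1/l}, 2]; in particular no eigenvalue of Δ lies in the open interval (1 − (1 − 𝒟)^{1/l}, 1 + (1 − 𝒟)^{1/l}). If l is odd, then λ_{N−1} ≤ 1 − (1 − 𝒟)^{1/l}. -/

import Mathlib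

open Finset

noncomputable section

namespace BJ

variable {V : Type*} [Fintype V] [DecidableEq V]

/-- The degree `d_i = ∑_j w_ij` of a vertex. -/
def deg (w : V → V → ℝ) (i : V) : ℝ := ∑ j, w i j

/-- The volume `vol(A) = ∑_{i ∈ A} d_i` of a vertex subset. -/
def vol (w : V → V → ℝ) (A : Finset V) : ℝ := ∑ i ∈ A, deg w i

/-- The total edge weight `|E(A,B)| = ∑_{i ∈ A, j ∈ B} w_ij` between two vertex subsets. -/
def eW (w : V → V → ℝ) (A B : Finset V) : ℝ := ∑ i ∈ A, ∑ j ∈ B, w i j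

/-- The normalized graph Laplacian `(Δu)(i) = u(i) - (1/d_i) ∑_j w_ij u(j)`. -/
def lap (w : V → V → ℝ) (u : V → ℝ) (i : V) : ℝ :=
  u i - (1 / deg w i) * ∑ j, w i j * u j

/-- `lam` is an eigenvalue of the normalized graph Laplacian. -/
def IsEigen (w : V → V → ℝ) (lam : ℝ) : Prop :=
  ∃ u : V → ℝ, u ≠ 0 ∧ ∀ i, lap w u i = lam * u i

/-- The weighted graph is connected: any two vertices are joined by a chain of
positive-weight edges. -/
def Conn (w : V → V → ℝ) : Prop :=
  ∀ i j : V, Relation.ReflTransGen (fun a b => 0 < w a b) i j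

/-- The weighted graph is bipartite: the vertex set splits into two nonempty classes with
no edges inside a class. -/
def Bipartite (w : V → V → ℝ) : Prop :=
  ∃ A : Finset V, A.Nonempty ∧ Aᶜ.Nonempty ∧
    (∀ i ∈ A, ∀ j ∈ A, w i j = 0) ∧ (∀ i ∈ Aᶜ, ∀ j ∈ Aᶜ, w i j = 0)

/-- The Cheeger constant
`h = min { |E(U,Uᶜ)| / vol(U) : ∅ ≠ U ⊊ V, vol(U) ≤ vol(V)/2 }`. -/
def cheeger (w : V → V → ℝ) : ℝ :=
  sInf { r : ℝ | ∃ U : Finset V, U.Nonempty ∧ U ≠ Finset.univ ∧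
    vol w U ≤ vol w Finset.univ / 2 ∧ r = eW w U Uᶜ / vol w U }

/-- The dual Cheeger constant
`h̄ = max { 2|E(V₁,V₂)| / (vol(V₁)+vol(V₂)) }` over pairs of disjoint nonempty vertex sets
`V₁, V₂` (the third class `V₃` of the partition being the complement of `V₁ ∪ V₂`). -/
def dualCheeger (w : V → V → ℝ) : ℝ :=
  sSup { r : ℝ | ∃ V1 V2 : Finset V, V1.Nonempty ∧ V2.Nonempty ∧ Disjoint V1 V2 ∧
    r = 2 * eW w V1 V2 / (vol w V1 + vol w V2) }

/-- The weights of the neighborhood graph `Γ[l]`: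
`w_ij[l] = ∑_{k₁,…,k_{l-1}} w_{i k₁} w_{k₁ k₂} ⋯ w_{k_{l-1} j} / (d_{k₁} ⋯ d_{k_{l-1}})`,
defined recursively (as a matrix, `wl w l = D ⬝ P^l`; in particular `wl w 1 = w`). -/
def wl (w : V → V → ℝ) : ℕ → V → V → ℝ
  | 0 => fun i j => if i = j then deg w i else 0
  | n + 1 => fun i j => ∑ k, wl w n i k * w k j / deg w k

/-!
Let `P = (w_ij / d_i)` be the transition matrix of the random walk on `Γ`, so that `Δ = 1 - P`. The
transition matrix of `Γ[l]` is `P ^ l`, hence every eigenvalue `μ` of `Δ` yields the eigenvalue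
`1 - (1 - μ) ^ l` of `Δ[l]`, and `1 - (1 - μ) ^ l ≤ 𝒟` says `1 - 𝒟 ≤ (1 - μ) ^ l`. Taking
`l`-th roots bounds `|1 - μ|` from below when `l` is even and `1 - μ` itself when `l` is odd.
Finally `0 ≤ μ ≤ 2` because `P` is row stochastic.
-/

lemma rpow_one_div_le_of_le_pow {l : ℕ} {x y : ℝ} (hl : l ≠ 0) (hx : 0 ≤ x) (hy : 0 ≤ y)
    (h : y ≤ x ^ l) : y ^ ((1 : ℝ) / l) ≤ x := by
  rwa [one_div, Real.rpow_inv_le_iff_of_pos hy hx (by positivity), Real.rpow_natCast]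

lemma rpow_one_div_le_abs_of_even {l : ℕ} {x y : ℝ} (heven : Even l) (hl : l ≠ 0) (hy : 0 ≤ y)
    (h : y ≤ x ^ l) : y ^ ((1 : ℝ) / l) ≤ |x| :=
  rpow_one_div_le_of_le_pow hl (abs_nonneg x) hy (by rwa [heven.pow_abs])

lemma rpow_one_div_le_of_odd {l : ℕ} {x y : ℝ} (hodd : Odd l) (hy : 0 ≤ y)
    (h : y ≤ x ^ l) : y ^ ((1 : ℝ) / l) ≤ x :=
  rpow_one_div_le_of_le_pow hodd.pos.ne' (hodd.pow_nonneg_iff.mp (hy.trans h)) hy h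

lemma abs_eigenvalue_le_one_of_mem_rowStochastic {A : Matrix V V ℝ}
    (hA : A ∈ Matrix.rowStochastic ℝ V) {c : ℝ}
    (hc : Module.End.HasEigenvalue (Matrix.toLin' A) c) : |c| ≤ 1 := by
  obtain ⟨k, hk⟩ := eigenvalue_mem_ball hc
  have hA_nonneg (i j : V) : 0 ≤ A i j := Matrix.nonneg_of_mem_rowStochastic hA
  have radius_eq : ∑ j ∈ univ.erase k, ‖A k j‖ = 1 - A k k := by
    simp only [Real.norm_of_nonneg (hA_nonneg _ _)]
    rw [sum_erase_eq_sub (mem_univ k), Matrix.sum_row_of_mem_rowStochastic hA]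
  rw [radius_eq, Metric.mem_closedBall, Real.dist_eq] at hk
  calc |c| = |(c - A k k) + A k k| := by rw [sub_add_cancel]
    _ ≤ |c - A k k| + |A k k| := abs_add_le _ _
    _ ≤ (1 - A k k) + A k k := add_le_add hk (abs_of_nonneg (hA_nonneg k k)).le
    _ = 1 := sub_add_cancel _ _

/-- The transition matrix `P i j = w_ij / d_i` of the random walk on the weighted graph, through
which `lap w` is `1 - P`. By the convention `x / 0 = 0`, a vertex of degree `0` has a zero row. -/
def transitionMatrix (w : V → V → ℝ) : Matrix V V ℝ :=
  Matrix.of fun i j => w i j / deg w i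

section

open scoped Matrix

variable {w : V → V → ℝ}

omit [DecidableEq V] in
lemma lap_eq_sub_transitionMatrix_mulVec (w : V → V → ℝ) (u : V → ℝ) :
    lap w u = u - transitionMatrix w *ᵥ u := by
  ext i
  simp only [lap, Pi.sub_apply, Matrix.mulVec, dotProduct, transitionMatrix, Matrix.of_apply,
    mul_sum]
  congr! 2
  ring

omit [DecidableEq V] in
lemma transitionMatrix_mulVec_one (hdeg : ∀ i, deg w i ≠ 0) : transitionMatrix w *ᵥ 1 = 1 := by
  ext i
  simp only [Matrix.mulVec, dotProduct, transitionMatrix, Matrix.of_apply, Pi.one_apply, mul_one,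
    ← sum_div]
  exact div_self (hdeg i)

lemma transitionMatrix_pow_mulVec_one (hdeg : ∀ i, deg w i ≠ 0) (l : ℕ) :
    transitionMatrix w ^ l *ᵥ 1 = 1 := by
  induction l with
  | zero => simp
  | succ n ih => rw [pow_succ, ← Matrix.mulVec_mulVec, transitionMatrix_mulVec_one hdeg, ih]

lemma transitionMatrix_mem_rowStochastic (hnn : ∀ i j, 0 ≤ w i j) (hdeg : ∀ i, deg w i ≠ 0) :
    transitionMatrix w ∈ Matrix.rowStochastic ℝ V :=
  Matrix.mem_rowStochastic.mpr
    ⟨fun i j => div_nonneg (hnn i j) (sum_nonneg fun k _ => hnn i k),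
      transitionMatrix_mulVec_one hdeg⟩

lemma wl_eq_deg_mul_transitionMatrix_pow (w : V → V → ℝ) (l : ℕ) (i j : V) :
    wl w l i j = deg w i * (transitionMatrix w ^ l) i j := by
  induction l generalizing j with
  | zero => simp [wl, Matrix.one_apply]
  | succ n ih =>
    simp only [wl, ih, pow_succ, Matrix.mul_apply, mul_sum, transitionMatrix, Matrix.of_apply,
      mul_div_assoc, mul_assoc]

lemma deg_wl (hdeg : ∀ i, deg w i ≠ 0) (l : ℕ) (i : V) : deg (wl w l) i = deg w i := by
  have row_sum : ∑ j, (transitionMatrix w ^ l) i j = 1 := by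
    simpa [Matrix.mulVec, dotProduct] using congrFun (transitionMatrix_pow_mulVec_one hdeg l) i
  calc deg (wl w l) i = ∑ j, deg w i * (transitionMatrix w ^ l) i j :=
        sum_congr rfl fun j _ => wl_eq_deg_mul_transitionMatrix_pow w l i j
    _ = deg w i := by rw [← mul_sum, row_sum, mul_one]

lemma transitionMatrix_wl (hdeg : ∀ i, deg w i ≠ 0) (l : ℕ) :
    transitionMatrix (wl w l) = transitionMatrix w ^ l := by
  ext i j
  rw [transitionMatrix, Matrix.of_apply, deg_wl hdeg, wl_eq_deg_mul_transitionMatrix_pow,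
    mul_div_cancel_left₀ _ (hdeg i)]

lemma isEigen_iff_hasEigenvalue_transitionMatrix {μ : ℝ} :
    IsEigen w μ ↔ Module.End.HasEigenvalue (Matrix.toLin' (transitionMatrix w)) (1 - μ) := by
  have eigenvector_iff (u : V → ℝ) :
      (∀ i, lap w u i = μ * u i) ↔ transitionMatrix w *ᵥ u = (1 - μ) • u := by
    rw [sub_smul, one_smul, eq_sub_iff_add_eq, ← eq_sub_iff_add_eq', eq_comm,
      ← lap_eq_sub_transitionMatrix_mulVec, funext_iff]
    rfl
  simp only [IsEigen, eigenvector_iff]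
  constructor
  · rintro ⟨u, hu, hPu⟩
    exact Module.End.hasEigenvalue_of_hasEigenvector
      (Module.End.hasEigenvector_iff.mpr ⟨Module.End.mem_eigenspace_iff.mpr hPu, hu⟩)
  · intro h
    obtain ⟨u, hu⟩ := h.exists_hasEigenvector
    exact ⟨u, hu.2, hu.apply_eq_smul⟩

omit [DecidableEq V] in
lemma finite_setOf_isEigen (w : V → V → ℝ) : {μ : ℝ | IsEigen w μ}.Finite := by
  classical
  simp only [isEigen_iff_hasEigenvalue_transitionMatrix]
  exact (Module.End.finite_hasEigenvalue _).preimage sub_right_injective.injOn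

namespace IsEigen

variable {μ D : ℝ} {l : ℕ}

omit [DecidableEq V] in
lemma mem_Icc (hμ : IsEigen w μ) (hnn : ∀ i j, 0 ≤ w i j) (hdeg : ∀ i, deg w i ≠ 0) :
    μ ∈ Set.Icc 0 2 := by
  classical
  have h := abs_eigenvalue_le_one_of_mem_rowStochastic
    (transitionMatrix_mem_rowStochastic hnn hdeg)
    (isEigen_iff_hasEigenvalue_transitionMatrix.mp hμ)
  rw [abs_le] at h
  constructor <;> linarith

lemma wl_one_sub_pow (hμ : IsEigen w μ) (hdeg : ∀ i, deg w i ≠ 0) (l : ℕ) :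
    IsEigen (wl w l) (1 - (1 - μ) ^ l) := by
  rw [isEigen_iff_hasEigenvalue_transitionMatrix] at hμ ⊢
  rw [transitionMatrix_wl hdeg, Matrix.toLin'_pow, sub_sub_cancel]
  exact hμ.pow l

lemma one_sub_le_one_sub_pow (hμ : IsEigen w μ) (hdeg : ∀ i, deg w i ≠ 0)
    (hD : sSup {ν : ℝ | IsEigen (wl w l) ν} ≤ D) : 1 - D ≤ (1 - μ) ^ l := by
  have h : 1 - (1 - μ) ^ l ≤ D :=
    (le_csSup (finite_setOf_isEigen (wl w l)).bddAbove (hμ.wl_one_sub_pow hdeg l)).trans hD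
  linarith

lemma le_or_le_of_even (hμ : IsEigen w μ) (hdeg : ∀ i, deg w i ≠ 0) (heven : Even l)
    (hl : l ≠ 0) (hD1 : D ≤ 1) (hD : sSup {ν : ℝ | IsEigen (wl w l) ν} ≤ D) :
    μ ≤ 1 - (1 - D) ^ ((1 : ℝ) / l) ∨ 1 + (1 - D) ^ ((1 : ℝ) / l) ≤ μ := by
  have h := rpow_one_div_le_abs_of_even heven hl (sub_nonneg.mpr hD1)
    (hμ.one_sub_le_one_sub_pow hdeg hD)
  exact (le_abs.mp h).imp (fun _ => by linarith) (fun _ => by linarith)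

lemma le_of_odd (hμ : IsEigen w μ) (hdeg : ∀ i, deg w i ≠ 0) (hodd : Odd l) (hD1 : D ≤ 1)
    (hD : sSup {ν : ℝ | IsEigen (wl w l) ν} ≤ D) :
    μ ≤ 1 - (1 - D) ^ ((1 : ℝ) / l) :=
  le_sub_comm.mp <| rpow_one_div_le_of_odd hodd (sub_nonneg.mpr hD1)
    (hμ.one_sub_le_one_sub_pow hdeg hD)

end IsEigen

theorem eigenvalue_gap_from_neighborhood_upper_bound_general
    (hnn : ∀ i j, 0 ≤ w i j) (hdeg : ∀ i, deg w i ≠ 0) {l : ℕ} (hl : l ≠ 0) {D : ℝ}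
    (hD1 : D ≤ 1) (hD : sSup {ν : ℝ | IsEigen (wl w l) ν} ≤ D) :
    (Even l → ∀ μ, IsEigen w μ →
        (0 ≤ μ ∧ μ ≤ 1 - (1 - D) ^ ((1 : ℝ) / l)) ∨
          (1 + (1 - D) ^ ((1 : ℝ) / l) ≤ μ ∧ μ ≤ 2)) ∧
      (Odd l → ∀ μ, IsEigen w μ → μ ≤ 1 - (1 - D) ^ ((1 : ℝ) / l)) := by
  refine ⟨fun heven μ hμ => ?_, fun hodd μ hμ => hμ.le_of_odd hdeg hodd hD1 hD⟩
  obtain ⟨hμ0, hμ2⟩ := hμ.mem_Icc hnn hdeg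
  exact (hμ.le_or_le_of_even hdeg heven hl hD1 hD).imp (fun h => ⟨hμ0, h⟩) (fun h => ⟨h, hμ2⟩)

end

/-- Theorem: spectral gap around 1 from an upper bound on
`λ_{N-1}[l]`. Let `𝒟 ≤ 1` be an upper bound for the largest eigenvalue of the
normalized Laplacian of the neighborhood graph `Γ[l]`. If `l` is even, every eigenvalue
of `Δ` lies in `[0, 1 - (1-𝒟)^{1/l}] ∪ [1 + (1-𝒟)^{1/l}, 2]`; if `l` is odd, then
`λ_{N-1} ≤ 1 - (1-𝒟)^{1/l}`. -/
theorem eigenvalue_gap_from_neighborhood_upper_bound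
    (w : V → V → ℝ)
    (hsym : ∀ i j, w i j = w j i) (hnn : ∀ i j, 0 ≤ w i j)
    (hdeg : ∀ i, 0 < deg w i) (hconn : Conn w) (hN : 2 ≤ Fintype.card V)
    (lamN : ℝ) (hlamN : IsEigen w lamN) (hlamNmax : ∀ μ, IsEigen w μ → μ ≤ lamN)
    (l : ℕ) (hl : 1 ≤ l)
    (lamNl : ℝ) (hlamNl : lamNl = sSup { μ : ℝ | IsEigen (wl w l) μ })
    (D : ℝ) (hD1 : D ≤ 1) (hDle : lamNl ≤ D) :
    (Even l → ∀ μ, IsEigen w μ →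
        (0 ≤ μ ∧ μ ≤ 1 - (1 - D) ^ ((1 : ℝ) / l)) ∨
          (1 + (1 - D) ^ ((1 : ℝ) / l) ≤ μ ∧ μ ≤ 2)) ∧
      (Odd l → lamN ≤ 1 - (1 - D) ^ ((1 : ℝ) / l)) := by
  have gap := eigenvalue_gap_from_neighborhood_upper_bound_general hnn (fun i => (hdeg i).ne')
    (Nat.one_le_iff_ne_zero.mp hl) hD1 (hlamNl ▸ hDle)
  exact ⟨gap.1, fun hodd => gap.2 hodd lamN hlamN⟩

end BJ
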